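/- arXiv:0904.1444 — 8 statements merged into one kernel-verified Lean document; each statement's English description precedes it below -/
import Mathlib

section
/- For every real α > 2, the improper integral ∫₀^∞ r/(1+r^α)² dr equals (α−2)·π/(α²·sin(2π/α)). -/
open Real MeasureTheory

theorem aux_beta (a b : ℝ) (ha : 0 < a) (hb : 0 < b) :
    ∫ x in Set.Ioo (0:ℝ) 1, x ^ (a - 1) * (1 - x) ^ (b - 1)
      = Real.Gamma a * Real.Gamma b / Real.Gamma (a + b) := by
  have h := ProbabilityTheory.beta_eq_betaIntegralReal a b ha hb
  rw [ProbabilityTheory.beta] at h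
  rw [h, Complex.betaIntegral, intervalIntegral.integral_of_le zero_le_one,
    ← integral_Ioc_eq_integral_Ioo, ← RCLike.re_eq_complex_re, ← integral_re]
  · refine setIntegral_congr_fun measurableSet_Ioc fun x hx => ?_
    have h1 : (0:ℝ) ≤ 1 - x := by linarith [hx.2]
    have e : (x:ℂ) ^ ((a:ℂ) - 1) * (1 - (x:ℂ)) ^ ((b:ℂ) - 1)
        = ((x ^ (a - 1) * (1 - x) ^ (b - 1) : ℝ) : ℂ) := by
      rw [Complex.ofReal_mul, Complex.ofReal_cpow hx.1.le, Complex.ofReal_cpow h1]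
      push_cast
      rfl
    simp only [e]
    simp
  · have := Complex.betaIntegral_convergent (u := a) (v := b) (by simpa) (by simpa)
    rwa [intervalIntegrable_iff_integrableOn_Ioc_of_le (by simp)] at this

theorem aux_image (α : ℝ) (hα : 2 < α) :
    (fun r : ℝ => r ^ α / (1 + r ^ α)) '' Set.Ioi 0 = Set.Ioo 0 1 := by
  ext x
  constructor
  · rintro ⟨r, hr, rfl⟩
    have : 0 < r ^ α := Real.rpow_pos_of_pos hr α
    refine ⟨by positivity, ?_⟩
    change _ / _ < _
    rw [div_lt_one (by positivity)]
    linarith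
  · rintro ⟨h0, h1⟩
    have h2 : 0 < 1 - x := by linarith
    refine ⟨(x / (1 - x)) ^ (1 / α), Real.rpow_pos_of_pos (by positivity) _, ?_⟩
    have : ((x / (1 - x)) ^ (1 / α)) ^ α = x / (1 - x) := by
      rw [← Real.rpow_mul (by positivity), one_div, inv_mul_cancel₀ (by linarith), Real.rpow_one]
    simp only [this]
    have h3 : 1 + x / (1 - x) = 1 / (1 - x) := by field_simp; ring
    rw [h3]
    field_simp

theorem aux_inj (α : ℝ) (hα : 2 < α) :
    Set.InjOn (fun r : ℝ => r ^ α / (1 + r ^ α)) (Set.Ioi 0) := by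
  intro r hr s hs h
  have h1 : 0 < r ^ α := Real.rpow_pos_of_pos hr α
  have h2 : 0 < s ^ α := Real.rpow_pos_of_pos hs α
  simp only at h
  rw [div_eq_div_iff (by positivity) (by positivity)] at h
  have h3 : r ^ α = s ^ α := by linarith
  exact (Real.rpow_left_inj (le_of_lt hr) (le_of_lt hs) (by linarith)).1 h3

theorem aux_deriv (α r : ℝ) (hr : 0 < r) :
    HasDerivAt (fun r : ℝ => r ^ α / (1 + r ^ α)) (α * r ^ (α - 1) / (1 + r ^ α) ^ 2) r := by
  have h1 : 0 < r ^ α := Real.rpow_pos_of_pos hr α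
  have h := Real.hasDerivAt_rpow_const (x := r) (p := α) (Or.inl hr.ne')
  have h2 : 1 + r ^ α ≠ 0 := by positivity
  refine (HasDerivAt.fun_div h (h.const_add 1) h2).congr_deriv ?_
  congr 1
  ring

/-- For every real `α > 2`, the improper integral `∫₀^∞ r/(1+r^α)² dr`
equals `(α−2)·π/(α²·sin(2π/α))`. -/
theorem radial_integral_second_moment (α : ℝ) (hα : 2 < α) :
    ∫ r in Set.Ioi (0 : ℝ), r / (1 + r ^ α) ^ 2 =
      (α - 2) * π / (α ^ 2 * Real.sin (2 * π / α)) := by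
  have hα0 : 0 < α := by linarith
  have hlt : 2 / α < 1 := by rw [div_lt_one hα0]; exact hα
  have hb := aux_beta (2 / α) (2 - 2 / α) (by positivity) (by linarith)
  rw [← aux_image α hα, integral_image_eq_integral_abs_deriv_smul measurableSet_Ioi
    (fun r hr => (aux_deriv α r hr).hasDerivWithinAt) (aux_inj α hα)] at hb
  have hc : ∫ r in Set.Ioi (0 : ℝ), r / (1 + r ^ α) ^ 2 = (1 / α) *
      (Real.Gamma (2 / α) * Real.Gamma (2 - 2 / α) / Real.Gamma (2 / α + (2 - 2 / α))) := by
    rw [← hb, ← integral_const_mul]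
    refine setIntegral_congr_fun measurableSet_Ioi fun r hr => ?_
    have hr : 0 < r := hr
    have h1 : 0 < r ^ α := Real.rpow_pos_of_pos hr α
    have h2 : 0 < r ^ (α - 1) := Real.rpow_pos_of_pos hr _
    have e1 : 1 - r ^ α / (1 + r ^ α) = (1 + r ^ α)⁻¹ := by field_simp; ring
    have e2 : (r ^ α / (1 + r ^ α)) ^ (2 / α - 1) * ((1 + r ^ α)⁻¹) ^ (2 - 2 / α - 1)
        = r ^ (2 - α) := by
      have e3 : 2 - 2 / α - 1 = -(2 / α - 1) := by ring
      rw [e3, Real.inv_rpow (by positivity), Real.rpow_neg (by positivity), inv_inv,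
        ← Real.mul_rpow (by positivity) (by positivity), div_mul_cancel₀ _ (by positivity),
        ← Real.rpow_mul hr.le]
      congr 1
      field_simp
    have e4 : r ^ (α - 1) * r ^ (2 - α) = r := by
      rw [← Real.rpow_add hr]
      ring_nf
      simp
    simp only [smul_eq_mul, e1, e2]
    rw [abs_of_pos (by positivity)]
    nth_rewrite 1 [← e4]
    field_simp
  have hG : Real.Gamma (2 - 2 / α) = (1 - 2 / α) * Real.Gamma (1 - 2 / α) := by
    rw [← Real.Gamma_add_one (by linarith)]
    congr 1
    ring
  have hR := Real.Gamma_mul_Gamma_one_sub (2 / α)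
  have h2 : 2 / α + (2 - 2 / α) = 2 := by ring
  rw [hc, h2, Real.Gamma_two, hG, mul_left_comm (Real.Gamma _), hR]
  have hs : π * (2 / α) = 2 * π / α := by ring
  rw [hs]
  have hsin : 0 < Real.sin (2 * π / α) := by
    rw [← hs]
    apply Real.sin_pos_of_pos_of_lt_pi
    · positivity
    · nlinarith [Real.pi_pos]
  field_simp
end

section
/- For ε > 0 and α > 2, the function x ↦ 1/(ε+‖x‖^α) is integrable on ℝ² and ∫_{ℝ²} 1/(ε+‖x‖^α) dx = 2π²·ε^{2/α−1}/(α·sin(2π/α)). -/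
open Real MeasureTheory

lemma lint_of_int {X : Type*} [MeasurableSpace X] {μ : Measure X} {f : X → ℝ} {c : ℝ}
    (hf : ∀ᵐ x ∂μ, 0 ≤ f x) (hc : 0 < c) (h : ∫ x, f x ∂μ = c) :
    ∫⁻ x, ENNReal.ofReal (f x) ∂μ = ENNReal.ofReal c := by
  have hi : Integrable f μ := by
    by_contra hn
    rw [integral_undef hn] at h
    exact hc.ne h
  rw [← ofReal_integral_eq_lintegral_ofReal hi hf, h]

lemma aux_complex (ε α : ℝ) (hε : 0 < ε) (hα : 2 < α) :
    ∫⁻ x : ℂ, ENNReal.ofReal (1 / (ε + ‖x‖ ^ α)) =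
      ENNReal.ofReal (2 * π ^ 2 * ε ^ (2 / α - 1) / (α * Real.sin (2 * π / α))) := by
  have hα0 : 0 < α := by linarith
  have h2 : 2 / α < 1 := by rw [div_lt_one hα0]; exact hα
  have h2' : 0 < 2 / α := by positivity
  have hG1 : 0 < Real.Gamma (2 / α + 1) := Real.Gamma_pos_of_pos (by linarith)
  have hG2 : 0 < Real.Gamma (1 - 2 / α) := Real.Gamma_pos_of_pos (by linarith)
  have h1 : ∀ x : ℂ, ENNReal.ofReal (1 / (ε + ‖x‖ ^ α)) =
      ∫⁻ t in Set.Ioi (0:ℝ), ENNReal.ofReal (rexp (-((ε + ‖x‖ ^ α) * t))) := by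
    intro x
    have hp : 0 < ε + ‖x‖ ^ α := by positivity
    symm
    apply lint_of_int (ae_of_all _ fun t => (exp_pos _).le) (by positivity)
    have := Real.integral_rpow_mul_exp_neg_mul_Ioi (a := 1) (r := ε + ‖x‖ ^ α) one_pos hp
    simpa using this
  simp_rw [h1]
  rw [lintegral_lintegral_swap (by fun_prop)]
  have h3 : ∀ t ∈ Set.Ioi (0:ℝ), ∫⁻ x : ℂ, ENNReal.ofReal (rexp (-((ε + ‖x‖ ^ α) * t))) =
      ENNReal.ofReal (π * Real.Gamma (2 / α + 1) * (t ^ ((1 - 2 / α) - 1) * rexp (-(ε * t)))) := by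
    intro t ht
    have ht : 0 < t := ht
    apply lint_of_int (ae_of_all _ fun t => (exp_pos _).le) (by positivity)
    have := Complex.integral_exp_neg_mul_rpow (p := α) (b := t) (by linarith) ht
    have e : ∀ x : ℂ, rexp (-((ε + ‖x‖ ^ α) * t)) = rexp (-(ε * t)) * rexp (-t * ‖x‖ ^ α) := by
      intro x; rw [← Real.exp_add]; congr 1; ring
    simp_rw [e]
    rw [integral_const_mul, this, show (1 - 2 / α) - 1 = -2 / α by ring]
    ring
  rw [setLIntegral_congr_fun measurableSet_Ioi h3]
  have hv : 2 * π ^ 2 * ε ^ (2 / α - 1) / (α * Real.sin (2 * π / α)) =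
      π * Real.Gamma (2 / α + 1) * ((1 / ε) ^ (1 - 2 / α) * Real.Gamma (1 - 2 / α)) := by
    rw [Real.Gamma_add_one h2'.ne', one_div, Real.inv_rpow hε.le, ← Real.rpow_neg hε.le]
    have := Real.Gamma_mul_Gamma_one_sub (2 / α)
    calc _ = π * (2 / α) * (π / sin (π * (2 / α))) * ε ^ (2 / α - 1) := by
          rw [show π * (2 / α) = 2 * π / α by ring]
          ring
      _ = _ := by
          rw [← this, neg_sub]; ring
  rw [hv]
  apply lint_of_int
  · filter_upwards [ae_restrict_mem measurableSet_Ioi] with t ht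
    have ht : 0 < t := ht
    positivity
  · positivity
  · rw [integral_const_mul,
      Real.integral_rpow_mul_exp_neg_mul_Ioi (a := 1 - 2 / α) (r := ε) (by linarith) hε]

/-- For `ε > 0` and `α > 2`, the function `x ↦ 1/(ε+‖x‖^α)` is integrable on `ℝ²` and
`∫_{ℝ²} 1/(ε+‖x‖^α) dx = 2π²·ε^(2/α−1)/(α·sin(2π/α))`. -/
theorem pathloss_integral (ε α : ℝ) (hε : 0 < ε) (hα : 2 < α) :
    Integrable (fun x : EuclideanSpace ℝ (Fin 2) => 1 / (ε + ‖x‖ ^ α)) ∧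
    ∫ x : EuclideanSpace ℝ (Fin 2), 1 / (ε + ‖x‖ ^ α) =
      2 * π ^ 2 * ε ^ (2 / α - 1) / (α * Real.sin (2 * π / α)) := by
  have hα0 : 0 < α := by linarith
  have hm : Measurable (fun x : EuclideanSpace ℝ (Fin 2) => 1 / (ε + ‖x‖ ^ α)) := by fun_prop
  have hnn : ∀ x : EuclideanSpace ℝ (Fin 2), 0 ≤ 1 / (ε + ‖x‖ ^ α) := fun x => by positivity
  have hL : ∫⁻ x : EuclideanSpace ℝ (Fin 2), ENNReal.ofReal (1 / (ε + ‖x‖ ^ α)) =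
      ENNReal.ofReal (2 * π ^ 2 * ε ^ (2 / α - 1) / (α * Real.sin (2 * π / α))) := by
    rw [← aux_complex ε α hε hα,
      ← (Complex.orthonormalBasisOneI.measurePreserving_repr).lintegral_comp
        hm.ennreal_ofReal]
    simp only [LinearIsometryEquiv.norm_map]
  have hs : 0 < Real.sin (2 * π / α) := by
    apply Real.sin_pos_of_pos_of_lt_pi (by positivity)
    rw [div_lt_iff₀ hα0]
    nlinarith [Real.pi_pos]
  refine ⟨⟨hm.aestronglyMeasurable, ?_⟩, ?_⟩
  · rw [hasFiniteIntegral_iff_ofReal (ae_of_all _ hnn), hL]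
    exact ENNReal.ofReal_lt_top
  · rw [integral_eq_lintegral_of_nonneg_ae (ae_of_all _ hnn) hm.aestronglyMeasurable, hL,
      ENNReal.toReal_ofReal (by positivity)]
end

section
/- For ε > 0 and α > 2, the function x ↦ 1/(ε+‖x‖^α)² is integrable on ℝ² and ∫_{ℝ²} 1/(ε+‖x‖^α)² dx = 2π²·(α−2)·ε^{2/α−2}/(α²·sin(2π/α)). -/
open Real MeasureTheory

lemma real_beta_aux (a b : ℝ) (ha : 0 < a) (hb : 0 < b) :
    IntegrableOn (fun x : ℝ => x ^ (a - 1) * (1 - x) ^ (b - 1)) (Set.Ioo 0 1) ∧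
    ∫ x in Set.Ioo (0 : ℝ) 1, x ^ (a - 1) * (1 - x) ^ (b - 1) =
      Real.Gamma a * Real.Gamma b / Real.Gamma (a + b) := by
  have hc := Complex.betaIntegral_convergent (u := a) (v := b) (by simpa) (by simpa)
  rw [intervalIntegrable_iff_integrableOn_Ioo_of_le zero_le_one] at hc
  have hcongr : Set.EqOn (fun x : ℝ => (x : ℂ) ^ ((a : ℂ) - 1) * (1 - (x : ℂ)) ^ ((b : ℂ) - 1))
      (fun x : ℝ => ((x ^ (a - 1) * (1 - x) ^ (b - 1) : ℝ) : ℂ)) (Set.Ioo 0 1) := by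
    intro x hx
    simp only
    rw [Complex.ofReal_mul, Complex.ofReal_cpow hx.1.le, Complex.ofReal_cpow (by linarith [hx.2])]
    push_cast
    rfl
  have hi := (integrableOn_congr_fun hcongr measurableSet_Ioo).1 hc
  refine ⟨?_, ?_⟩
  · have := hi.re
    simp only [RCLike.re_to_complex, Complex.ofReal_re] at this
    exact this
  · have h1 := ProbabilityTheory.beta_eq_betaIntegralReal a b ha hb
    rw [ProbabilityTheory.beta] at h1
    rw [h1, Complex.betaIntegral, intervalIntegral.integral_of_le zero_le_one,
      integral_Ioc_eq_integral_Ioo, setIntegral_congr_fun measurableSet_Ioo hcongr,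
      integral_complex_ofReal, Complex.ofReal_re]

lemma radial_aux (ε α : ℝ) (hε : 0 < ε) (hα : 2 < α) :
    IntegrableOn (fun r : ℝ => r * (1 / (ε + r ^ α)) ^ 2) (Set.Ioi 0) ∧
    ∫ r in Set.Ioi (0 : ℝ), r * (1 / (ε + r ^ α)) ^ 2 =
      ε ^ (2 / α - 2) / α * (Real.Gamma (2 / α) * Real.Gamma (2 - 2 / α)) := by
  have hα0 : 0 < α := by linarith
  have hs : 2 / α < 1 := by rw [div_lt_one hα0]; exact hα
  have hs0 : 0 < 2 / α := by positivity
  obtain ⟨hB1, hB2⟩ := real_beta_aux (2 / α) (2 - 2 / α) hs0 (by linarith)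
  have hpos : ∀ r ∈ Set.Ioi (0 : ℝ), 0 < r ^ α := fun r hr => Real.rpow_pos_of_pos hr _
  have himg : (fun r : ℝ => r ^ α / (ε + r ^ α)) '' Set.Ioi 0 = Set.Ioo 0 1 := by
    ext y
    constructor
    · rintro ⟨r, hr, rfl⟩
      have := hpos r hr
      refine ⟨by positivity, ?_⟩
      simp only
      rw [div_lt_one (by positivity)]
      linarith
    · rintro ⟨h0, h1⟩
      have h1' : 0 < 1 - y := by linarith
      refine ⟨(ε * y / (1 - y)) ^ (α⁻¹), Set.mem_Ioi.2 (by positivity), ?_⟩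
      simp only
      rw [Real.rpow_inv_rpow (by positivity) hα0.ne']
      field_simp
      ring
  have hinj : Set.InjOn (fun r : ℝ => r ^ α / (ε + r ^ α)) (Set.Ioi 0) := by
    intro x hx y hy h
    have h1 := hpos x hx
    have h2 := hpos y hy
    simp only at h
    rw [div_eq_div_iff (by positivity) (by positivity)] at h
    have h3 : x ^ α = y ^ α := by
      have : ε * x ^ α = ε * y ^ α := by linarith
      exact mul_left_cancel₀ hε.ne' this
    exact Real.rpow_left_injOn hα0.ne' (Set.mem_setOf_eq ▸ (Set.mem_Ioi.1 hx).le) (Set.mem_setOf_eq ▸ (Set.mem_Ioi.1 hy).le) h3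
  have hder : ∀ r ∈ Set.Ioi (0 : ℝ), HasDerivWithinAt (fun r : ℝ => r ^ α / (ε + r ^ α))
      (ε * α * r ^ (α - 1) / (ε + r ^ α) ^ 2) (Set.Ioi 0) r := by
    intro r hr
    have h1 := hpos r hr
    have hd := Real.hasDerivAt_rpow_const (x := r) (p := α) (Or.inl (ne_of_gt hr))
    have := hd.div (hd.const_add ε) (by positivity)
    refine (this.congr_deriv ?_).hasDerivWithinAt
    congr 1
    ring
  have hEq : Set.EqOn (fun r : ℝ => |ε * α * r ^ (α - 1) / (ε + r ^ α) ^ 2| •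
      ((r ^ α / (ε + r ^ α)) ^ (2 / α - 1) * (1 - r ^ α / (ε + r ^ α)) ^ (2 - 2 / α - 1)))
      (fun r => (α * ε ^ (2 - 2 / α)) * (r * (1 / (ε + r ^ α)) ^ 2)) (Set.Ioi 0) := by
    intro r hr
    have hr' : 0 < r := hr
    have h1 := hpos r hr
    have hq : 0 < ε + r ^ α := by positivity
    simp only [smul_eq_mul]
    rw [abs_of_pos (by positivity)]
    have e1 : 1 - r ^ α / (ε + r ^ α) = ε / (ε + r ^ α) := by field_simp; ring
    rw [e1, Real.div_rpow h1.le hq.le, Real.div_rpow hε.le hq.le, ← Real.rpow_mul hr'.le]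
    have e2 : α * (2 / α - 1) = 2 - α := by field_simp
    have e3 : r ^ (α - 1) * r ^ (2 - α) = r := by
      rw [← Real.rpow_add hr']; norm_num
    have e4 : (ε + r ^ α) ^ (2 / α - 1) * (ε + r ^ α) ^ (2 - 2 / α - 1) = 1 := by
      rw [← Real.rpow_add hq, show 2 / α - 1 + (2 - 2 / α - 1) = 0 by ring, Real.rpow_zero]
    have e5 : ε * ε ^ (2 - 2 / α - 1) = ε ^ (2 - 2 / α) := by
      rw [← Real.rpow_one_add' hε.le (by linarith)]; congr 1; ring
    rw [e2]
    calc _ = α * (ε * ε ^ (2 - 2 / α - 1)) * (r ^ (α - 1) * r ^ (2 - α)) / (ε + r ^ α) ^ 2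
          / ((ε + r ^ α) ^ (2 / α - 1) * (ε + r ^ α) ^ (2 - 2 / α - 1)) := by
          field_simp
      _ = _ := by rw [e3, e4, e5]; field_simp
  have hne : α * ε ^ (2 - 2 / α) ≠ 0 := by positivity
  rw [← himg] at hB1 hB2
  rw [integrableOn_image_iff_integrableOn_abs_deriv_smul measurableSet_Ioi hder hinj,
    integrableOn_congr_fun hEq measurableSet_Ioi] at hB1
  rw [integral_image_eq_integral_abs_deriv_smul measurableSet_Ioi hder hinj,
    setIntegral_congr_fun measurableSet_Ioi hEq, integral_const_mul] at hB2
  constructor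
  · have := hB1.const_mul (α * ε ^ (2 - 2 / α))⁻¹
    simp only [inv_mul_cancel_left₀ hne] at this
    exact this
  · apply mul_left_cancel₀ hne
    rw [hB2]
    have e6 : ε ^ (2 - 2 / α) * ε ^ (2 / α - 2) = 1 := by
      rw [← Real.rpow_add hε]; norm_num
    have e7 : Real.Gamma (2 / α + (2 - 2 / α)) = 1 := by
      rw [show 2 / α + (2 - 2 / α) = 2 by ring, Real.Gamma_two]
    rw [e7, div_one]
    calc _ = (ε ^ (2 - 2 / α) * ε ^ (2 / α - 2)) *
        (Real.Gamma (2 / α) * Real.Gamma (2 - 2 / α)) := by rw [e6, one_mul]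
      _ = _ := by field_simp

/-- For `ε > 0` and `α > 2`, the function `x ↦ 1/(ε+‖x‖^α)²` is integrable on `ℝ²` and
`∫_{ℝ²} 1/(ε+‖x‖^α)² dx = 2π²·(α−2)·ε^(2/α−2)/(α²·sin(2π/α))`. -/
theorem pathloss_squared_integral (ε α : ℝ) (hε : 0 < ε) (hα : 2 < α) :
    Integrable (fun x : EuclideanSpace ℝ (Fin 2) => (1 / (ε + ‖x‖ ^ α)) ^ 2) ∧
    ∫ x : EuclideanSpace ℝ (Fin 2), (1 / (ε + ‖x‖ ^ α)) ^ 2 =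
      2 * π ^ 2 * (α - 2) * ε ^ (2 / α - 2) / (α ^ 2 * Real.sin (2 * π / α)) := by
  obtain ⟨h1, h2⟩ := radial_aux ε α hε hα
  have hα0 : 0 < α := by linarith
  have hs : 2 / α < 1 := by rw [div_lt_one hα0]; exact hα
  constructor
  · rw [integrable_fun_norm_addHaar volume (E := EuclideanSpace ℝ (Fin 2))
      (f := fun r : ℝ => (1 / (ε + r ^ α)) ^ 2)]
    simpa only [finrank_euclideanSpace_fin, Nat.add_one_sub_one, pow_one, smul_eq_mul] using h1
  · rw [integral_fun_norm_addHaar volume (E := EuclideanSpace ℝ (Fin 2))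
      (fun r : ℝ => (1 / (ε + r ^ α)) ^ 2)]
    simp only [finrank_euclideanSpace_fin, Nat.add_one_sub_one, pow_one, smul_eq_mul]
    rw [h2]
    have hv : (volume : Measure (EuclideanSpace ℝ (Fin 2))).real (Metric.ball 0 1) = π := by
      simp [Measure.real, Real.pi_pos.le]
    have hG : Real.Gamma (2 - 2 / α) = (1 - 2 / α) * Real.Gamma (1 - 2 / α) := by
      rw [← Real.Gamma_add_one (by linarith)]; congr 1; ring
    have hR := Real.Gamma_mul_Gamma_one_sub (2 / α)
    have hsin : π * (2 / α) = 2 * π / α := by ring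
    rw [hsin] at hR
    rw [hv, hG, mul_left_comm (Real.Gamma _), hR]
    have : Real.sin (2 * π / α) ≠ 0 := by
      apply ne_of_gt
      apply Real.sin_pos_of_pos_of_lt_pi (by positivity)
      rw [← hsin]
      nlinarith [Real.pi_pos]
    rw [nsmul_eq_mul]
    push_cast
    field_simp
end

section
/- Fix α > 2 and u, v ∈ ℝ² with u ≠ v. For ε > 0 let g_ε(x) = 1/(ε+‖x‖^α). Then lim_{ε→0⁺} (∫_{ℝ²} g_ε(x−u)·g_ε(x−v) dx) / (∫_{ℝ²} g_ε(x)² dx) = 0. -/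
open Real MeasureTheory

lemma aux_int (α : ℝ) (hα : 2 < α) :
    Integrable (fun y : EuclideanSpace ℝ (Fin 2) => 1 / (1 + ‖y‖ ^ α)) := by
  have h0 : Integrable (fun y : EuclideanSpace ℝ (Fin 2) => (2:ℝ) ^ α * (1 + ‖y‖) ^ (-α)) := by
    apply Integrable.const_mul
    apply integrable_one_add_norm
    simpa using hα
  refine h0.mono' ?_ ?_
  · apply Measurable.aestronglyMeasurable
    fun_prop
  · refine Filter.Eventually.of_forall fun y => ?_
    have hy := norm_nonneg y
    have hp : 0 ≤ ‖y‖ ^ α := by positivity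
    rw [Real.norm_of_nonneg (by positivity), Real.rpow_neg (by positivity), ← div_eq_mul_inv,
      div_le_div_iff₀ (by positivity) (by positivity), one_mul]
    rcases le_total ‖y‖ 1 with h | h
    · have : (1 + ‖y‖) ^ α ≤ 2 ^ α :=
        Real.rpow_le_rpow (by positivity) (by linarith) (by linarith)
      nlinarith [Real.rpow_pos_of_pos (two_pos : (0:ℝ) < 2) α]
    · have : (1 + ‖y‖) ^ α ≤ (2 * ‖y‖) ^ α :=
        Real.rpow_le_rpow (by positivity) (by linarith) (by linarith)
      rw [Real.mul_rpow (by norm_num) hy] at this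
      nlinarith [Real.rpow_pos_of_pos (two_pos : (0:ℝ) < 2) α]

lemma aux_scale (α : ℝ) (hα : 2 < α) (ε : ℝ) (hε : 0 < ε) (y : EuclideanSpace ℝ (Fin 2)) :
    1 / (ε + ‖(ε ^ α⁻¹) • y‖ ^ α) = ε⁻¹ * (1 / (1 + ‖y‖ ^ α)) := by
  have h1 : ‖(ε ^ α⁻¹) • y‖ ^ α = ε * ‖y‖ ^ α := by
    rw [norm_smul, Real.norm_of_nonneg (by positivity), Real.mul_rpow (by positivity)
      (by positivity), ← Real.rpow_mul hε.le, inv_mul_cancel₀ (by linarith), Real.rpow_one]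
  have : 0 ≤ ‖y‖ ^ α := by positivity
  rw [h1]
  field_simp

lemma aux_cov (s : ℝ) (hs : 0 < s) (f : EuclideanSpace ℝ (Fin 2) → ℝ) :
    ∫ x, f x = s ^ 2 * ∫ y, f (s • y) := by
  rw [Measure.integral_comp_smul_of_nonneg _ _ _ (hR := hs.le)]
  simp
  field_simp

lemma aux_lim (α : ℝ) (hα : 2 < α) (w : EuclideanSpace ℝ (Fin 2)) (hw : w ≠ 0) :
    Filter.Tendsto (fun ε : ℝ => ∫ y : EuclideanSpace ℝ (Fin 2),
      (1 / (1 + ‖y‖ ^ α)) * (1 / (1 + ‖y - (ε ^ α⁻¹)⁻¹ • w‖ ^ α)))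
      (nhdsWithin 0 (Set.Ioi 0)) (nhds 0) := by
  have hα0 : 0 < α := by linarith
  have key := tendsto_integral_filter_of_dominated_convergence
    (μ := (volume : Measure (EuclideanSpace ℝ (Fin 2))))
    (l := nhdsWithin (0:ℝ) (Set.Ioi 0)) (f := fun _ => (0:ℝ))
    (F := fun (ε : ℝ) (y : EuclideanSpace ℝ (Fin 2)) =>
      (1 / (1 + ‖y‖ ^ α)) * (1 / (1 + ‖y - (ε ^ α⁻¹)⁻¹ • w‖ ^ α)))
    (fun y => 1 / (1 + ‖y‖ ^ α)) ?_ ?_ (aux_int α hα) ?_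
  · simpa using key
  · refine Filter.Eventually.of_forall fun ε => ?_
    apply Measurable.aestronglyMeasurable
    fun_prop
  · refine Filter.Eventually.of_forall fun ε => Filter.Eventually.of_forall fun y => ?_
    have h1 : 0 ≤ ‖y - (ε ^ α⁻¹)⁻¹ • w‖ ^ α := by positivity
    rw [Real.norm_of_nonneg (by positivity)]
    apply mul_le_of_le_one_right (by positivity)
    rw [div_le_one (by positivity)]
    linarith
  · refine Filter.Eventually.of_forall fun y => ?_
    suffices hh : Filter.Tendsto (fun ε : ℝ => 1 / (1 + ‖y - (ε ^ α⁻¹)⁻¹ • w‖ ^ α))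
        (nhdsWithin 0 (Set.Ioi 0)) (nhds 0) by
      simpa only [mul_zero] using hh.const_mul (1 / (1 + ‖y‖ ^ α))
    have hs : Filter.Tendsto (fun ε : ℝ => (ε ^ α⁻¹)⁻¹) (nhdsWithin 0 (Set.Ioi 0))
        Filter.atTop := by
      apply Filter.Tendsto.inv_tendsto_nhdsGT_zero
      refine tendsto_nhdsWithin_iff.2 ⟨?_, ?_⟩
      · have := (Real.continuousAt_rpow_const (0:ℝ) α⁻¹ (Or.inr (by positivity))).tendsto
        rw [Real.zero_rpow (by positivity)] at this
        exact this.mono_left nhdsWithin_le_nhds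
      · filter_upwards [self_mem_nhdsWithin] with ε hε
        exact Real.rpow_pos_of_pos hε _
    have hn : Filter.Tendsto (fun ε : ℝ => ‖y - (ε ^ α⁻¹)⁻¹ • w‖) (nhdsWithin 0 (Set.Ioi 0))
        Filter.atTop := by
      have h2 : Filter.Tendsto (fun ε : ℝ => (ε ^ α⁻¹)⁻¹ * ‖w‖ - ‖y‖)
          (nhdsWithin 0 (Set.Ioi 0)) Filter.atTop :=
        Filter.tendsto_atTop_add_const_right _ _ (hs.atTop_mul_const (norm_pos_iff.2 hw))
      refine Filter.tendsto_atTop_mono (fun ε => ?_) h2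
      have h3 := norm_sub_norm_le ((ε ^ α⁻¹)⁻¹ • w) y
      rw [norm_sub_rev, norm_smul] at h3
      have h4 := mul_le_mul_of_nonneg_right (le_abs_self ((ε ^ α⁻¹)⁻¹)) (norm_nonneg w)
      rw [Real.norm_eq_abs] at h3
      linarith
    simp only [one_div]
    apply Filter.Tendsto.inv_tendsto_atTop
    exact Filter.tendsto_atTop_add_const_left _ _ ((tendsto_rpow_atTop hα0).comp hn)

/-- Fix `α > 2` and `u ≠ v` in `ℝ²`. For `ε > 0` let `g_ε(x) = 1/(ε+‖x‖^α)`. Then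
`lim_{ε→0⁺} (∫ g_ε(x−u)·g_ε(x−v) dx) / (∫ g_ε(x)² dx) = 0`. -/
theorem spatial_correlation_vanishes_singular_limit (α : ℝ) (hα : 2 < α)
    (u v : EuclideanSpace ℝ (Fin 2)) (huv : u ≠ v) :
    Filter.Tendsto
      (fun ε : ℝ =>
        (∫ x : EuclideanSpace ℝ (Fin 2),
            (1 / (ε + ‖x - u‖ ^ α)) * (1 / (ε + ‖x - v‖ ^ α))) /
        (∫ x : EuclideanSpace ℝ (Fin 2), (1 / (ε + ‖x‖ ^ α)) ^ 2))
      (nhdsWithin 0 (Set.Ioi 0)) (nhds 0) := by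
  have hl := (aux_lim α hα (v - u) (sub_ne_zero.2 huv.symm)).div_const
    (∫ y : EuclideanSpace ℝ (Fin 2), (1 / (1 + ‖y‖ ^ α)) ^ 2)
  rw [zero_div] at hl
  refine hl.congr' ?_
  filter_upwards [self_mem_nhdsWithin] with ε hε
  have hε : 0 < ε := hε
  have hs : 0 < ε ^ α⁻¹ := Real.rpow_pos_of_pos hε _
  have hN : ∫ x : EuclideanSpace ℝ (Fin 2),
      (1 / (ε + ‖x - u‖ ^ α)) * (1 / (ε + ‖x - v‖ ^ α)) =
      ((ε ^ α⁻¹) ^ 2 * (ε⁻¹) ^ 2) * ∫ y : EuclideanSpace ℝ (Fin 2),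
      (1 / (1 + ‖y‖ ^ α)) * (1 / (1 + ‖y - (ε ^ α⁻¹)⁻¹ • (v - u)‖ ^ α)) := by
    have h1 := integral_sub_right_eq_self (μ := (volume : Measure (EuclideanSpace ℝ (Fin 2))))
      (fun z => (1 / (ε + ‖z‖ ^ α)) * (1 / (ε + ‖z - (v - u)‖ ^ α))) u
    simp only [sub_sub_sub_cancel_right, sub_sub, add_sub_cancel] at h1
    rw [h1, aux_cov _ hs, mul_assoc, ← integral_const_mul ((ε⁻¹) ^ 2)]
    congr 2
    funext y
    have h2 : (ε ^ α⁻¹) • y - (v - u) = (ε ^ α⁻¹) • (y - (ε ^ α⁻¹)⁻¹ • (v - u)) := by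
      rw [smul_sub, smul_inv_smul₀ hs.ne']
    rw [h2, aux_scale α hα ε hε, aux_scale α hα ε hε]
    ring
  have hD : ∫ x : EuclideanSpace ℝ (Fin 2), (1 / (ε + ‖x‖ ^ α)) ^ 2 =
      ((ε ^ α⁻¹) ^ 2 * (ε⁻¹) ^ 2) * ∫ y : EuclideanSpace ℝ (Fin 2),
      (1 / (1 + ‖y‖ ^ α)) ^ 2 := by
    rw [aux_cov _ hs, mul_assoc, ← integral_const_mul ((ε⁻¹) ^ 2)]
    congr 2
    funext y
    rw [aux_scale α hα ε hε]
    ring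
  rw [hN, hD, mul_div_mul_left _ _ (by positivity)]
end

section
/- For every a > 0 and α > 2, the function x ↦ (a/(a+‖x‖^α))² is integrable on ℝ² and ∫_{ℝ²} (a/(a+‖x‖^α))² dx = 2·a^{2/α}·π²·(α−2)/(α²·sin(2π/α)). -/
open Real MeasureTheory

lemma beta_real (u v : ℝ) (hu : 0 < u) (hv : 0 < v) :
    IntegrableOn (fun t : ℝ => t ^ (u - 1) * (1 - t) ^ (v - 1)) (Set.Ioo 0 1) ∧
    ∫ t in Set.Ioo (0 : ℝ) 1, t ^ (u - 1) * (1 - t) ^ (v - 1) =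
      Real.Gamma u * Real.Gamma v / Real.Gamma (u + v) := by
  have h1 := Complex.betaIntegral_convergent (u := u) (v := v) (by simpa) (by simpa)
  rw [intervalIntegrable_iff_integrableOn_Ioo_of_le zero_le_one] at h1
  have heq : Set.EqOn (fun x : ℝ => (x : ℂ) ^ ((u : ℂ) - 1) * (1 - (x : ℂ)) ^ ((v : ℂ) - 1))
      (fun t : ℝ => ((t ^ (u - 1) * (1 - t) ^ (v - 1) : ℝ) : ℂ)) (Set.Ioo 0 1) := by
    intro x hx
    have h2 : (0 : ℝ) ≤ 1 - x := by linarith [hx.2]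
    simp only
    rw [Complex.ofReal_mul, Complex.ofReal_cpow hx.1.le, Complex.ofReal_cpow h2]
    push_cast
    rfl
  have h3 := h1.congr_fun heq measurableSet_Ioo
  refine ⟨by simpa using! h3.re, ?_⟩
  have h4 := Complex.betaIntegral_eq_Gamma_mul_div u v (by simpa) (by simpa)
  rw [Complex.betaIntegral, intervalIntegral.integral_of_le zero_le_one,
    integral_Ioc_eq_integral_Ioo, setIntegral_congr_fun measurableSet_Ioo heq,
    integral_complex_ofReal, ← Complex.ofReal_add] at h4
  simp only [Complex.Gamma_ofReal] at h4
  exact_mod_cast h4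

lemma radial (a α : ℝ) (ha : 0 < a) (hα : 2 < α) :
    IntegrableOn (fun y : ℝ => y * (a / (a + y ^ α)) ^ 2) (Set.Ioi 0) ∧
    ∫ y in Set.Ioi (0 : ℝ), y * (a / (a + y ^ α)) ^ 2 =
      a ^ (2 / α) / α * ((1 - 2 / α) * (π / Real.sin (π * (2 / α)))) := by
  have hα0 : 0 < α := by linarith
  have hd0 : 0 < 2 / α := by positivity
  have hd1 : 2 / α < 1 := by rw [div_lt_one hα0]; exact hα
  obtain ⟨hI, hV⟩ := beta_real (2 / α) (2 - 2 / α) hd0 (by linarith)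
  set f : ℝ → ℝ := fun r => r ^ α / (a + r ^ α) with hf
  set f' : ℝ → ℝ := fun r => α * a * r ^ (α - 1) / (a + r ^ α) ^ 2 with hf'
  have hder : ∀ x ∈ Set.Ioi (0 : ℝ), HasDerivWithinAt f (f' x) (Set.Ioi 0) x := by
    intro x hx
    have hx : 0 < x := hx
    have hp : 0 < x ^ α := by positivity
    have h1 := Real.hasDerivAt_rpow_const (p := α) (Or.inl hx.ne')
    have h2 := h1.div (h1.const_add a) (by positivity)
    refine (h2.congr_deriv ?_).hasDerivWithinAt
    simp only [hf']
    congr 1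
    ring
  have hinj : Set.InjOn f (Set.Ioi 0) := by
    intro x hx y hy h
    have hx : 0 < x := hx
    have hy : 0 < y := hy
    have hpx : 0 < x ^ α := by positivity
    have hpy : 0 < y ^ α := by positivity
    simp only [hf] at h
    rw [div_eq_div_iff (by positivity) (by positivity)] at h
    have : x ^ α = y ^ α := by
      apply mul_left_cancel₀ ha.ne'
      linarith
    exact Real.rpow_left_injOn hα0.ne' hx.le hy.le this
  have himg : f '' Set.Ioi 0 = Set.Ioo 0 1 := by
    ext t
    constructor
    · rintro ⟨x, hx, rfl⟩
      have hx : 0 < x := hx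
      have hpx : 0 < x ^ α := by positivity
      refine ⟨by simp only [hf]; positivity, ?_⟩
      simp only [hf]
      rw [div_lt_one (by positivity)]
      linarith
    · rintro ⟨h0, h1⟩
      have h1' : 0 < 1 - t := by linarith
      have hq : 0 < a * t / (1 - t) := by positivity
      refine ⟨(a * t / (1 - t)) ^ α⁻¹, Real.rpow_pos_of_pos hq _, ?_⟩
      simp only [hf]
      rw [Real.rpow_inv_rpow hq.le hα0.ne']
      have : a + a * t / (1 - t) = a / (1 - t) := by field_simp; ring
      rw [this]
      field_simp
  set g : ℝ → ℝ := fun t => t ^ (2 / α - 1) * (1 - t) ^ (2 - 2 / α - 1) with hg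
  have hA := integrableOn_image_iff_integrableOn_abs_deriv_smul measurableSet_Ioi hder hinj g
  have hB := integral_image_eq_integral_abs_deriv_smul measurableSet_Ioi hder hinj g
  rw [himg] at hA hB
  have hE : Set.EqOn (fun y : ℝ => a ^ (2 / α) / α * (|f' y| • g (f y)))
      (fun y : ℝ => y * (a / (a + y ^ α)) ^ 2) (Set.Ioi 0) := by
    intro y hy
    have hy : 0 < y := hy
    have hp : 0 < y ^ α := by positivity
    have hs : 0 < a + y ^ α := by positivity
    have e0 : 1 - f y = a / (a + y ^ α) := by simp only [hf]; field_simp; ring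
    have e1 : g (f y) = y ^ (2 - α) * a ^ (1 - 2 / α) := by
      simp only [hg]
      rw [e0]
      simp only [hf]
      rw [Real.div_rpow hp.le hs.le, Real.div_rpow ha.le hs.le, ← Real.rpow_mul hy.le,
        div_mul_div_comm, ← Real.rpow_add hs]
      rw [show 2 / α - 1 + (2 - 2 / α - 1) = 0 by ring, Real.rpow_zero, div_one]
      congr 2
      · field_simp
      · ring
    have e2 : |f' y| = f' y := abs_of_nonneg (by simp only [hf']; positivity)
    have e3 : y ^ (α - 1) * y ^ (2 - α) = y := by
      rw [← Real.rpow_add hy, show α - 1 + (2 - α) = 1 by ring, Real.rpow_one]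
    have e4 : a ^ (2 / α) * a ^ (1 - 2 / α) = a := by
      rw [← Real.rpow_add ha, show 2 / α + (1 - 2 / α) = 1 by ring, Real.rpow_one]
    simp only
    rw [e1, e2, smul_eq_mul]
    simp only [hf']
    calc _ = (y ^ (α - 1) * y ^ (2 - α)) * (a ^ (2 / α) * a ^ (1 - 2 / α)) * a
          / (a + y ^ α) ^ 2 := by field_simp
      _ = _ := by rw [e3, e4]; field_simp
  constructor
  · exact IntegrableOn.congr_fun ((hA.1 hI).const_mul _) hE measurableSet_Ioi
  · rw [← setIntegral_congr_fun measurableSet_Ioi hE, integral_const_mul, ← hB, hV]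
    rw [← Real.Gamma_mul_Gamma_one_sub, show 2 / α + (2 - 2 / α) = 2 by ring, Real.Gamma_two,
      show 2 - 2 / α = (1 - 2 / α) + 1 by ring, Real.Gamma_add_one (by linarith)]
    ring


/-- For every `a > 0` and `α > 2`, the function `x ↦ (a/(a+‖x‖^α))²` is integrable on
`ℝ²` and `∫_{ℝ²} (a/(a+‖x‖^α))² dx = 2·a^(2/α)·π²·(α−2)/(α²·sin(2π/α))`. -/
theorem outage_exponent_integral (a α : ℝ) (ha : 0 < a) (hα : 2 < α) :
    Integrable (fun x : EuclideanSpace ℝ (Fin 2) => (a / (a + ‖x‖ ^ α)) ^ 2) ∧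
    ∫ x : EuclideanSpace ℝ (Fin 2), (a / (a + ‖x‖ ^ α)) ^ 2 =
      2 * a ^ (2 / α) * π ^ 2 * (α - 2) / (α ^ 2 * Real.sin (2 * π / α)) := by
  obtain ⟨hI, hV⟩ := radial a α ha hα
  have hα0 : 0 < α := by linarith
  constructor
  · rw [integrable_fun_norm_addHaar volume (f := fun y : ℝ => (a / (a + y ^ α)) ^ 2)]
    simpa using hI
  · rw [integral_fun_norm_addHaar volume (fun y : ℝ => (a / (a + y ^ α)) ^ 2)]
    simp only [finrank_euclideanSpace, Fintype.card_fin, Nat.add_one_sub_one, pow_one,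
      smul_eq_mul, nsmul_eq_mul, hV, Measure.real, EuclideanSpace.volume_ball_fin_two]
    rw [show π * (2 / α) = 2 * π / α by ring]
    simp [Real.pi_nonneg]
    field_simp
end

section
/- For every a > 0 and α > 2, the function x ↦ a/(a+‖x‖^α) is integrable on ℝ² and ∫_{ℝ²} a/(a+‖x‖^α) dx = 2·a^{2/α}·π²/(α·sin(2π/α)). -/
open Real MeasureTheory

lemma aux_inner_r (a α : ℝ) (hα : 2 < α) (t : ℝ) (ht : 0 < t) :
    IntegrableOn (fun r : ℝ => r ^ (1:ℝ) * rexp (-t * r ^ α) * (a * rexp (-(a * t)))) (Set.Ioi 0) ∧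
    ∫ r in Set.Ioi (0:ℝ), r ^ (1:ℝ) * rexp (-t * r ^ α) * (a * rexp (-(a * t))) =
      (a * (1 / α) * Gamma (2 / α)) * (t ^ ((1 - 2 / α) - 1) * rexp (-(a * t))) := by
  refine ⟨(integrableOn_rpow_mul_exp_neg_mul_rpow (by norm_num) (by linarith) ht).mul_const _, ?_⟩
  rw [integral_mul_const, integral_rpow_mul_exp_neg_mul_rpow (by linarith) (by norm_num) ht]
  have h1 : -((1:ℝ) + 1) / α = (1 - 2 / α) - 1 := by ring
  have h2 : ((1:ℝ) + 1) / α = 2 / α := by norm_num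
  rw [h1, h2]
  ring

lemma aux_inner_t (a α : ℝ) (ha : 0 < a) (r : ℝ) (hr : 0 < r) :
    ∫ t in Set.Ioi (0:ℝ), r ^ (1:ℝ) * rexp (-t * r ^ α) * (a * rexp (-(a * t))) =
      r * (a / (a + r ^ α)) := by
  have hp : 0 < r ^ α := rpow_pos_of_pos hr α
  have h : ∀ t : ℝ, r ^ (1:ℝ) * rexp (-t * r ^ α) * (a * rexp (-(a * t))) =
      (r * a) * rexp (-(a + r ^ α) * t) := by
    intro t
    rw [rpow_one, show -(a + r ^ α) * t = -t * r ^ α + -(a * t) by ring, Real.exp_add]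
    ring
  simp_rw [h]
  rw [integral_const_mul, integral_exp_mul_Ioi (by linarith)]
  simp only [mul_zero, Real.exp_zero]
  rw [neg_div_neg_eq]
  ring

lemma aux_radial (a α : ℝ) (ha : 0 < a) (hα : 2 < α) :
    IntegrableOn (fun r : ℝ => r * (a / (a + r ^ α))) (Set.Ioi 0) ∧
    ∫ r in Set.Ioi (0:ℝ), r * (a / (a + r ^ α)) =
      a ^ (2 / α) * π / (α * Real.sin (2 * π / α)) := by
  have hα0 : 0 < α := by linarith
  have hs : 0 < 1 - 2 / α := by
    rw [sub_pos, div_lt_one hα0]; exact hα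
  let f : ℝ → ℝ → ℝ := fun r t => r ^ (1:ℝ) * rexp (-t * r ^ α) * (a * rexp (-(a * t)))
  have hI := Real.integral_rpow_mul_exp_neg_mul_Ioi hs ha
  have hint : Integrable (Function.uncurry f)
      ((volume.restrict (Set.Ioi (0:ℝ))).prod (volume.restrict (Set.Ioi (0:ℝ)))) := by
    rw [integrable_prod_iff']
    · refine ⟨?_, ?_⟩
      · filter_upwards [ae_restrict_mem measurableSet_Ioi] with t ht
        exact (aux_inner_r a α hα t ht).1
      · have h0 : IntegrableOn (fun t : ℝ => (a * (1 / α) * Gamma (2 / α)) *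
            (t ^ ((1 - 2 / α) - 1) * rexp (-(a * t)))) (Set.Ioi 0) := by
          refine Integrable.const_mul ?_ _
          by_contra hc
          rw [integral_undef hc] at hI
          have : 0 < (1 / a) ^ (1 - 2 / α) * Gamma (1 - 2 / α) :=
            mul_pos (rpow_pos_of_pos (by positivity) _) (Gamma_pos_of_pos hs)
          linarith
        refine h0.congr ?_
        filter_upwards [ae_restrict_mem measurableSet_Ioi] with t ht
        rw [← (aux_inner_r a α hα t ht).2]
        refine setIntegral_congr_fun measurableSet_Ioi fun r hr => ?_
        have hr' : (0:ℝ) < r := hr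
        simp only [Function.uncurry, f]
        rw [Real.norm_of_nonneg (by positivity)]
    · refine Measurable.aestronglyMeasurable ?_
      simp only [Function.uncurry_def, f]
      fun_prop
  have hL : ∀ r ∈ Set.Ioi (0:ℝ), ∫ t in Set.Ioi (0:ℝ), f r t = r * (a / (a + r ^ α)) :=
    fun r hr => aux_inner_t a α ha r hr
  constructor
  · refine (hint.integral_prod_left).congr ?_
    filter_upwards [ae_restrict_mem measurableSet_Ioi] with r hr
    exact hL r hr
  · rw [← setIntegral_congr_fun measurableSet_Ioi hL, integral_integral_swap hint,
      setIntegral_congr_fun measurableSet_Ioi (fun t ht => (aux_inner_r a α hα t ht).2),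
      integral_const_mul, hI]
    have hG := Real.Gamma_mul_Gamma_one_sub (2 / α)
    rw [show π * (2 / α) = 2 * π / α by ring] at hG
    have hpow : a * (1 / a) ^ (1 - 2 / α) = a ^ (2 / α) := by
      rw [one_div, Real.inv_rpow ha.le, ← Real.rpow_neg ha.le]
      nth_rewrite 1 [← Real.rpow_one a]
      rw [← Real.rpow_add ha]
      congr 1; ring
    calc _ = (a * (1 / a) ^ (1 - 2 / α)) * (1 / α) * (Gamma (2 / α) * Gamma (1 - 2 / α)) := by ring
      _ = _ := by rw [hG, hpow]; rw [div_mul_eq_div_div]; ring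

/-- For every `a > 0` and `α > 2`, the function `x ↦ a/(a+‖x‖^α)` is integrable on `ℝ²`
and `∫_{ℝ²} a/(a+‖x‖^α) dx = 2·a^(2/α)·π²/(α·sin(2π/α))`. -/
theorem success_exponent_integral (a α : ℝ) (ha : 0 < a) (hα : 2 < α) :
    Integrable (fun x : EuclideanSpace ℝ (Fin 2) => a / (a + ‖x‖ ^ α)) ∧
    ∫ x : EuclideanSpace ℝ (Fin 2), a / (a + ‖x‖ ^ α) =
      2 * a ^ (2 / α) * π ^ 2 / (α * Real.sin (2 * π / α)) := by
  obtain ⟨h1, h2⟩ := aux_radial a α ha hα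
  constructor
  · refine (integrable_fun_norm_addHaar (E := EuclideanSpace ℝ (Fin 2)) volume
      (f := fun r : ℝ => a / (a + r ^ α))).2 ?_
    simpa using h1
  · rw [integral_fun_norm_addHaar (E := EuclideanSpace ℝ (Fin 2)) volume
      (fun r : ℝ => a / (a + r ^ α))]
    have hv : (volume : Measure (EuclideanSpace ℝ (Fin 2))).real (Metric.ball 0 1) = π := by
      rw [Measure.real, EuclideanSpace.volume_ball_fin_two]
      simp [pi_pos.le]
    rw [hv]
    simp only [finrank_euclideanSpace, Fintype.card_fin, Nat.add_one_sub_one, pow_one, smul_eq_mul,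
      nsmul_eq_mul, Nat.cast_ofNat]
    rw [h2]
    ring
end

section
/- For every λ > 0, p ∈ (0,1], a > 0, and α > 2, exp(λ·p²·∫_{ℝ²} (a/(a+‖x‖^α))² dx) > 1, and this quantity equals exp(2·λ·a^{2/α}·p²·π²·(α−2)·csc(2π/α)/α²), which is strictly increasing in each of λ, p, and a. -/
open Real MeasureTheory

lemma aux_beta_s17 (d : ℝ) (h0 : 0 < d) (h1 : d < 1) :
    ∫ x in Set.Ioo (0:ℝ) 1, x ^ (d - 1) * (1 - x) ^ (1 - d) = (1 - d) * π / Real.sin (π * d) := by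
  have hb : (0:ℝ) < 2 - d := by linarith
  have h : ∫ x in Set.Ioo (0:ℝ) 1, x ^ (d - 1) * (1 - x) ^ ((2 - d) - 1)
      = ProbabilityTheory.beta d (2 - d) := by
    rw [ProbabilityTheory.beta_eq_betaIntegralReal d (2 - d) h0 hb,
      Complex.betaIntegral, intervalIntegral.integral_of_le (by norm_num),
      ← integral_Ioc_eq_integral_Ioo, ← RCLike.re_to_complex, ← integral_re]
    · refine setIntegral_congr_fun measurableSet_Ioc fun x ⟨hx1, hx₂⟩ ↦ ?_
      norm_cast
      rw [← Complex.ofReal_cpow, ← Complex.ofReal_cpow, RCLike.re_to_complex,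
        Complex.re_mul_ofReal, Complex.ofReal_re]
      all_goals linarith
    convert! Complex.betaIntegral_convergent (u := d) (v := ((2 - d : ℝ) : ℂ))
      (by simpa) (by rw [Complex.ofReal_re]; exact hb)
    rw [intervalIntegrable_iff_integrableOn_Ioc_of_le (by simp), IntegrableOn]
  have e : (2 - d) - 1 = 1 - d := by ring
  rw [e] at h
  rw [h, ProbabilityTheory.beta]
  have e2 : 2 - d = (1 - d) + 1 := by ring
  have e3 : d + (2 - d) = 2 := by ring
  rw [e3, Real.Gamma_two, e2, Real.Gamma_add_one (by linarith), mul_div_assoc (1 - d),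
    ← Real.Gamma_mul_Gamma_one_sub]
  ring

lemma aux_subst (d a : ℝ) (ha : 0 < a) :
    ∫ t in Set.Ioi (0:ℝ), t ^ (d - 1) * (a / (a + t)) ^ 2 =
      a ^ d * ∫ x in Set.Ioo (0:ℝ) 1, x ^ (d - 1) * (1 - x) ^ (1 - d) := by
  have himg : (fun t : ℝ => t / (a + t)) '' Set.Ioi 0 = Set.Ioo 0 1 := by
    ext x
    constructor
    · rintro ⟨t, ht, rfl⟩
      have ht : 0 < t := ht
      refine ⟨by positivity, ?_⟩
      show t / (a + t) < 1
      rw [div_lt_one (by positivity)]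
      linarith
    · rintro ⟨h0, h1⟩
      have h2 : 0 < 1 - x := by linarith
      refine ⟨a * x / (1 - x), ?_, ?_⟩
      · show 0 < a * x / (1 - x)
        positivity
      · show a * x / (1 - x) / (a + a * x / (1 - x)) = x
        have : a + a * x / (1 - x) = a / (1 - x) := by field_simp; ring
        rw [this]
        field_simp
  have hinj : Set.InjOn (fun t : ℝ => t / (a + t)) (Set.Ioi 0) := by
    intro s hs t ht h
    have hs : 0 < s := hs
    have ht : 0 < t := ht
    have h : s / (a + s) = t / (a + t) := h
    rw [div_eq_div_iff (by positivity) (by positivity)] at h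
    have : a * (s - t) = 0 := by linarith
    rcases mul_eq_zero.mp this with h | h <;> linarith
  have hder : ∀ t ∈ Set.Ioi (0:ℝ), HasDerivWithinAt (fun t : ℝ => t / (a + t))
      (a / (a + t) ^ 2) (Set.Ioi 0) t := by
    intro t ht
    have ht : 0 < t := ht
    have := (hasDerivAt_id t).div ((hasDerivAt_id t).const_add a) (by simp; positivity)
    convert! this.hasDerivWithinAt using 1
    simp
  have key := integral_image_eq_integral_abs_deriv_smul measurableSet_Ioi hder hinj
    (fun x => x ^ (d - 1) * (1 - x) ^ (1 - d))
  rw [himg] at key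
  rw [key, ← integral_const_mul]
  refine setIntegral_congr_fun measurableSet_Ioi fun t ht ↦ ?_
  have ht : 0 < t := ht
  have hat : 0 < a + t := by positivity
  have e1 : 1 - t / (a + t) = a / (a + t) := by field_simp; ring
  have e2 : 1 - d = -(d - 1) := by ring
  have e3 : a ^ d = a ^ (d - 1) * a := by
    rw [← Real.rpow_add_one ha.ne']; congr 1; ring
  simp only [smul_eq_mul]
  rw [abs_of_pos (by positivity), e1, e2, Real.div_rpow ht.le hat.le, Real.div_rpow ha.le hat.le,
    Real.rpow_neg ha.le, Real.rpow_neg hat.le, e3]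
  have := Real.rpow_pos_of_pos ha (d - 1)
  have := Real.rpow_pos_of_pos hat (d - 1)
  field_simp

lemma aux_integral (α a : ℝ) (hα : 2 < α) (ha : 0 < a) :
    ∫ x : EuclideanSpace ℝ (Fin 2), (a / (a + ‖x‖ ^ α)) ^ 2 =
      2 * a ^ (2 / α) * π ^ 2 * (α - 2) * (Real.sin (2 * π / α))⁻¹ / α ^ 2 := by
  have hα0 : 0 < α := by linarith
  rw [integral_fun_norm_addHaar volume (fun r : ℝ => (a / (a + r ^ α)) ^ 2)]
  have hr := integral_comp_rpow_Ioi_of_pos (p := α) hα0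
    (g := fun t : ℝ => t ^ (2 / α - 1) * (a / (a + t)) ^ 2)
  rw [aux_subst _ _ ha, aux_beta_s17 (2 / α) (by positivity) (by rw [div_lt_one hα0]; exact hα)] at hr
  have h2 : ∫ r in Set.Ioi (0:ℝ), (α * r ^ (α - 1)) •
      ((r ^ α) ^ (2 / α - 1) * (a / (a + r ^ α)) ^ 2) =
      α * ∫ r in Set.Ioi (0:ℝ), r * (a / (a + r ^ α)) ^ 2 := by
    rw [← integral_const_mul]
    refine setIntegral_congr_fun measurableSet_Ioi fun r hr ↦ ?_
    have hr : 0 < r := hr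
    have : r ^ (α - 1) * (r ^ α) ^ (2 / α - 1) = r := by
      rw [← Real.rpow_mul hr.le, ← Real.rpow_add hr]
      have : α - 1 + α * (2 / α - 1) = 1 := by field_simp; ring
      rw [this, Real.rpow_one]
    simp only [smul_eq_mul]
    linear_combination (α * (a / (a + r ^ α)) ^ 2) * this
  rw [h2] at hr
  have hv : (volume : Measure (EuclideanSpace ℝ (Fin 2))).real (Metric.ball 0 1) = π := by
    simp [Measure.real, EuclideanSpace.volume_ball_fin_two, Real.pi_pos.le]
  rw [hv]
  simp only [finrank_euclideanSpace, Fintype.card_fin, smul_eq_mul, nsmul_eq_mul]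
  have h3 : ∫ r in Set.Ioi (0:ℝ), r * (a / (a + r ^ α)) ^ 2 =
    (a ^ (2 / α) * ((1 - 2 / α) * π / Real.sin (π * (2 / α)))) / α := by
    rw [eq_div_iff hα0.ne', mul_comm]; exact hr
  norm_num
  rw [h3]
  have e : π * (2 / α) = 2 * π / α := by ring
  rw [e]
  field_simp

/-- For every `λ > 0`, `p ∈ (0,1]`, `a > 0`, and `α > 2`,
`exp(λ·p²·∫_{ℝ²} (a/(a+‖x‖^α))² dx) > 1`, and this quantity equals
`exp(2·λ·a^(2/α)·p²·π²·(α−2)·csc(2π/α)/α²)`, which is strictly increasing in each of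
`λ`, `p`, and `a`. -/
theorem outage_correlation_ratio (α : ℝ) (hα : 2 < α)
    (lam p a : ℝ) (hlam : 0 < lam) (hp : p ∈ Set.Ioc (0 : ℝ) 1) (ha : 0 < a) :
    (1 < Real.exp (lam * p ^ 2 *
        ∫ x : EuclideanSpace ℝ (Fin 2), (a / (a + ‖x‖ ^ α)) ^ 2)) ∧
    (Real.exp (lam * p ^ 2 *
        ∫ x : EuclideanSpace ℝ (Fin 2), (a / (a + ‖x‖ ^ α)) ^ 2) =
      Real.exp (2 * lam * a ^ (2 / α) * p ^ 2 * π ^ 2 * (α - 2) *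
        (Real.sin (2 * π / α))⁻¹ / α ^ 2)) ∧
    (∀ lam' : ℝ, lam < lam' →
      Real.exp (2 * lam * a ^ (2 / α) * p ^ 2 * π ^ 2 * (α - 2) *
          (Real.sin (2 * π / α))⁻¹ / α ^ 2) <
        Real.exp (2 * lam' * a ^ (2 / α) * p ^ 2 * π ^ 2 * (α - 2) *
          (Real.sin (2 * π / α))⁻¹ / α ^ 2)) ∧
    (∀ p' : ℝ, p' ∈ Set.Ioc (0 : ℝ) 1 → p < p' →
      Real.exp (2 * lam * a ^ (2 / α) * p ^ 2 * π ^ 2 * (α - 2) *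
          (Real.sin (2 * π / α))⁻¹ / α ^ 2) <
        Real.exp (2 * lam * a ^ (2 / α) * p' ^ 2 * π ^ 2 * (α - 2) *
          (Real.sin (2 * π / α))⁻¹ / α ^ 2)) ∧
    (∀ a' : ℝ, a < a' →
      Real.exp (2 * lam * a ^ (2 / α) * p ^ 2 * π ^ 2 * (α - 2) *
          (Real.sin (2 * π / α))⁻¹ / α ^ 2) <
        Real.exp (2 * lam * a' ^ (2 / α) * p ^ 2 * π ^ 2 * (α - 2) *
          (Real.sin (2 * π / α))⁻¹ / α ^ 2)) := by
  have hα0 : 0 < α := by linarith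
  have hs : 0 < (Real.sin (2 * π / α))⁻¹ := by
    apply inv_pos.mpr
    apply Real.sin_pos_of_pos_of_lt_pi
    · positivity
    · rw [div_lt_iff₀ hα0]; nlinarith [Real.pi_pos]
  have hp0 : 0 < p := hp.1
  have h2 : 0 < α - 2 := by linarith
  have hap : 0 < a ^ (2 / α) := Real.rpow_pos_of_pos ha _
  rw [aux_integral α a hα ha]
  generalize (Real.sin (2 * π / α))⁻¹ = S at *
  refine ⟨?_, ?_, ?_, ?_, ?_⟩
  · rw [Real.one_lt_exp_iff]; positivity
  · congr 1; ring
  · intro l' hl; gcongr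
  · intro p' _ hpp; gcongr
  · intro a' haa; gcongr
end

section
/- For α > 2 and ε > 0, let g_ε(x) = 1/(ε+‖x‖^α) on ℝ². Then the ratio (2π²(α−2)/(ε^{2−2/α}·α²·sin(2π/α)))·((m+1)/m), for any m > 0, equals E[h²]·∫_{ℝ²} g_ε(x)² dx where E[h²] = (m+1)/m; i.e., ∫_{ℝ²} g_ε(x)² dx · (m+1)/m = 2π²(α−2)·(m+1)/(ε^{2−2/α}·α²·sin(2π/α)·m). -/
open Real MeasureTheory

lemma vf_inner_t (d ε s : ℝ) (hd : 0 < d) (hs : 0 < s) :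
    ∫ t in Set.Ioi (0:ℝ), t ^ (d - 1) * (s * Real.exp (-((ε + t) * s))) =
      Real.Gamma d * (s ^ ((2 - d) - 1) * Real.exp (-(ε * s))) := by
  have h1 : ∀ t : ℝ, t ^ (d - 1) * (s * Real.exp (-((ε + t) * s))) =
      (s * Real.exp (-(ε * s))) * (t ^ (d - 1) * Real.exp (-(s * t))) := by
    intro t
    rw [show -((ε + t) * s) = -(ε * s) + -(s * t) by ring, Real.exp_add]
    ring
  simp_rw [h1]
  rw [integral_const_mul, Real.integral_rpow_mul_exp_neg_mul_Ioi hd hs, one_div,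
    Real.inv_rpow hs.le, show (2 - d) - 1 = 1 - d by ring, Real.rpow_sub hs, Real.rpow_one]
  ring

lemma vf_inner_s (c a : ℝ) (ha : 0 < a) :
    ∫ s in Set.Ioi (0:ℝ), c * (s * Real.exp (-(a * s))) = c * (1 / a) ^ 2 := by
  have := Real.integral_rpow_mul_exp_neg_mul_Ioi (a := 2) two_pos ha
  rw [Real.Gamma_two, mul_one] at this
  norm_num at this
  rw [integral_const_mul, this]
  norm_num

lemma vf_gamma_integrable (d r : ℝ) (hd : 0 < d) (hr : 0 < r) :
    IntegrableOn (fun t : ℝ => t ^ (d - 1) * Real.exp (-(r * t))) (Set.Ioi 0) := by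
  have := integrableOn_rpow_mul_exp_neg_mul_rpow (p := 1) (s := d - 1) (b := r)
    (by linarith) one_pos hr
  simpa using this

lemma vf_key (d ε : ℝ) (hd : 0 < d) (hd2 : d < 2) (hε : 0 < ε) :
    ∫ t in Set.Ioi (0:ℝ), t ^ (d - 1) * (1 / (ε + t)) ^ 2 =
      Real.Gamma d * ((1 / ε) ^ (2 - d) * Real.Gamma (2 - d)) := by
  let f : ℝ → ℝ → ℝ := fun s t => t ^ (d - 1) * (s * Real.exp (-((ε + t) * s)))
  have hm : Measurable (Function.uncurry f) := by
    simp only [f, Function.uncurry_def]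
    fun_prop
  have hint : Integrable (Function.uncurry f)
      ((volume.restrict (Set.Ioi (0:ℝ))).prod (volume.restrict (Set.Ioi (0:ℝ)))) := by
    rw [integrable_prod_iff hm.aestronglyMeasurable]
    constructor
    · filter_upwards [ae_restrict_mem measurableSet_Ioi] with s hs
      have := (vf_gamma_integrable d s hd hs).const_mul (s * Real.exp (-(ε * s)))
      refine this.congr (Filter.Eventually.of_forall fun t => ?_)
      simp only [f, Function.uncurry]
      rw [show -((ε + t) * s) = -(ε * s) + -(s * t) by ring, Real.exp_add]
      ring
    · have := (vf_gamma_integrable (2 - d) ε (by linarith) hε).const_mul (Real.Gamma d)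
      refine this.congr ?_
      filter_upwards [ae_restrict_mem measurableSet_Ioi] with s hs
      rw [← vf_inner_t d ε s hd hs]
      refine setIntegral_congr_fun measurableSet_Ioi fun t ht => ?_
      have hs : 0 < s := hs
      have ht : 0 < t := ht
      simp only [f, Function.uncurry]
      rw [Real.norm_of_nonneg (by positivity)]
  have hsw := integral_integral_swap hint
  have hL : ∫ s in Set.Ioi (0:ℝ), ∫ t in Set.Ioi (0:ℝ), f s t =
      Real.Gamma d * ((1 / ε) ^ (2 - d) * Real.Gamma (2 - d)) := by
    rw [← Real.integral_rpow_mul_exp_neg_mul_Ioi (by linarith) hε, ← integral_const_mul]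
    exact setIntegral_congr_fun measurableSet_Ioi fun s hs => vf_inner_t d ε s hd hs
  rw [← hL, hsw]
  refine setIntegral_congr_fun measurableSet_Ioi fun t ht => ?_
  have ht : 0 < t := ht
  exact (vf_inner_s _ _ (by positivity)).symm

lemma vf_radial (α ε : ℝ) (hα : 2 < α) :
    ∫ r in Set.Ioi (0:ℝ), r * (1 / (ε + r ^ α)) ^ 2 =
      (1 / α) * ∫ t in Set.Ioi (0:ℝ), t ^ (2 / α - 1) * (1 / (ε + t)) ^ 2 := by
  have h0 : 0 < α := by linarith
  rw [← integral_comp_rpow_Ioi_of_pos (p := α)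
    (g := fun t : ℝ => t ^ (2 / α - 1) * (1 / (ε + t)) ^ 2) h0, ← integral_const_mul]
  refine setIntegral_congr_fun measurableSet_Ioi fun r hr => ?_
  have hr : 0 < r := hr
  simp only [smul_eq_mul]
  rw [← Real.rpow_mul hr.le]
  have : r ^ (α - 1) * r ^ (α * (2 / α - 1)) = r := by
    rw [← Real.rpow_add hr, show α - 1 + α * (2 / α - 1) = 1 by field_simp; ring, Real.rpow_one]
  calc r * (1 / (ε + r ^ α)) ^ 2
      = (r ^ (α - 1) * r ^ (α * (2 / α - 1))) * (1 / (ε + r ^ α)) ^ 2 := by rw [this]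
    _ = (1 / α * α) * ((r ^ (α - 1) * r ^ (α * (2 / α - 1))) * (1 / (ε + r ^ α)) ^ 2) := by
        rw [one_div_mul_cancel h0.ne', one_mul]
    _ = _ := by ring

/-- For `α > 2`, `ε > 0` and `m > 0`, with `g_ε(x) = 1/(ε+‖x‖^α)` on `ℝ²`,
`(∫_{ℝ²} g_ε(x)² dx) · (m+1)/m = 2π²(α−2)·(m+1)/(ε^(2−2/α)·α²·sin(2π/α)·m)`. -/
theorem variance_formula_core (α ε m : ℝ) (hα : 2 < α) (hε : 0 < ε) (hm : 0 < m) :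
    (∫ x : EuclideanSpace ℝ (Fin 2), (1 / (ε + ‖x‖ ^ α)) ^ 2) * ((m + 1) / m) =
      2 * π ^ 2 * (α - 2) * (m + 1) /
        (ε ^ (2 - 2 / α) * α ^ 2 * Real.sin (2 * π / α) * m) := by
  have h0 : 0 < α := by linarith
  have hd : 0 < 2 / α := by positivity
  have hd1 : 2 / α < 1 := by rw [div_lt_one h0]; exact hα
  have hsin : 0 < Real.sin (2 * π / α) := by
    rw [show 2 * π / α = 2 / α * π by ring]
    exact Real.sin_pos_of_pos_of_lt_pi (by positivity) (by nlinarith [Real.pi_pos])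
  have hε2 : 0 < ε ^ (2 - 2 / α) := Real.rpow_pos_of_pos hε _
  have hG : Real.Gamma (2 / α) * Real.Gamma (2 - 2 / α) =
      (1 - 2 / α) * (π / Real.sin (2 * π / α)) := by
    rw [show 2 - 2 / α = (1 - 2 / α) + 1 by ring, Real.Gamma_add_one (by linarith),
      show 2 * π / α = π * (2 / α) by ring, ← Real.Gamma_mul_Gamma_one_sub]
    ring
  have hb : (volume : Measure (EuclideanSpace ℝ (Fin 2))).real (Metric.ball 0 1) = π := by
    simp [Measure.real, EuclideanSpace.volume_ball_fin_two, Real.pi_pos.le]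
  have hI := integral_fun_norm_addHaar (volume : Measure (EuclideanSpace ℝ (Fin 2)))
    (fun r : ℝ => (1 / (ε + r ^ α)) ^ 2)
  rw [hI, hb, finrank_euclideanSpace_fin]
  simp only [smul_eq_mul, nsmul_eq_mul, Nat.add_one_sub_one, pow_one, Nat.cast_ofNat]
  rw [vf_radial α ε hα, vf_key _ _ hd (by linarith) hε, one_div ε, Real.inv_rpow hε.le,
    mul_left_comm (Real.Gamma _), hG]
  field_simp
end
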